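/- Let A be a finite set and let X ⊆ A^ℕ be a one-sided subshift of finite type, i.e., a closed shift-stable subset consisting of exactly those sequences containing no block from some fixed finite set of forbidden blocks. Then X has only finitely many σ-connected components (connected components in the σ-topology). -/

import Mathlib

open Function Set

/-- The one-sided shift map on sequences. -/
def oneShift {A : Type*} (a : ℕ → A) : ℕ → A := fun n => a (n + 1)

/-- The σ-topology on a topological space `X` with a self-map `σ`: its closed sets are
exactly the subsets of `X` that are closed and σ-stable. -/
def sigmaTopology {X : Type*} [TopologicalSpace X] (σ : X → X) : TopologicalSpace X where
  IsOpen s := IsClosed sᶜ ∧ ∀ x ∈ sᶜ, σ x ∈ sᶜ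
  isOpen_univ := by simp
  isOpen_inter s t hs ht := by
    show IsClosed (s ∩ t)ᶜ ∧ _
    rw [Set.compl_inter]
    exact ⟨hs.1.union ht.1, by rintro x (hx | hx); exacts [Or.inl (hs.2 x hx), Or.inr (ht.2 x hx)]⟩
  isOpen_sUnion S hS := by
    show IsClosed (⋃₀ S)ᶜ ∧ _
    rw [Set.compl_sUnion]
    constructor
    · exact isClosed_sInter (by rintro _ ⟨t, ht, rfl⟩; exact (hS t ht).1)
    · intro x hx
      rw [Set.mem_sInter] at hx ⊢
      rintro _ ⟨t, ht, rfl⟩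
      exact (hS t ht).2 x (hx _ ⟨t, ht, rfl⟩)

/-!
The σ-component of `y` is closed and contains every point whose forward orbit meets that of `y`.
The follower set of a prefix of `x ∈ X` consists of the tails that continue it to a point of `X`.
If there are only finitely many follower sets, then for each `x` one of them, `T`, occurs at
infinitely many prefixes of `x`. When `T` is also the follower set of a prefix of `y`, the
rest of `y` can be grafted onto arbitrarily long prefixes of `x`; the grafted points lie in the
σ-component of `y` and converge to `x`. Hence `T` determines the σ-component of `x`. In a subshift
of finite type, the follower set of a prefix depends only on which beginnings of forbidden blocks
the prefix ends with, so there are finitely many follower sets.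
-/

open Filter Topology

section Finiteness

variable {α β γ : Type*}

theorem finite_range_of_factorsThrough {f : α → β} {g : α → γ} (hf : (range f).Finite)
    (hgf : g.FactorsThrough f) : (range g).Finite := by
  rcases isEmpty_or_nonempty γ with _ | _
  · exact toFinite _
  · obtain ⟨e, rfl⟩ := (factorsThrough_iff g).1 hgf
    rw [range_comp]
    exact hf.image e

theorem exists_frequently_eq_of_finite_range {l : Filter α} [l.NeBot] {f : α → β}
    (hf : (range f).Finite) : ∃ b, ∃ᶠ i in l, f i = b := by
  by_contra! hrare
  obtain ⟨i, hi⟩ := ((eventually_all_finite hf).2 fun b _ => hrare b).exists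
  exact hi _ (mem_range_self i) rfl

end Finiteness

section SigmaComponent

variable {X : Type*} [TopologicalSpace X]

/-- The σ-connected component of `x`: its connected component in the σ-topology. The definition
keeps that topology apart from the given topology of `X`. -/
def sigmaComponent (σ : X → X) (x : X) : Set X :=
  @connectedComponent X (sigmaTopology σ) x

variable {σ : X → X} {x y : X}

theorem isClosed_sigmaTopology_iff {s : Set X} :
    IsClosed[sigmaTopology σ] s ↔ IsClosed s ∧ MapsTo σ s s := by
  rw [← @isOpen_compl_iff X s (sigmaTopology σ)]
  change IsClosed sᶜᶜ ∧ MapsTo σ sᶜᶜ sᶜᶜ ↔ _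
  rw [compl_compl]

theorem mem_sigmaComponent : x ∈ sigmaComponent σ x :=
  @mem_connectedComponent X (sigmaTopology σ) x

theorem sigmaComponent_eq_of_mem (h : x ∈ sigmaComponent σ y) :
    sigmaComponent σ x = sigmaComponent σ y :=
  (@connectedComponent_eq X (sigmaTopology σ) y x h).symm

theorem isClosed_sigmaComponent : IsClosed (sigmaComponent σ x) :=
  (isClosed_sigmaTopology_iff.1 (@isClosed_connectedComponent X (sigmaTopology σ) x)).1

theorem mapsTo_sigmaComponent : MapsTo σ (sigmaComponent σ x) (sigmaComponent σ x) :=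
  (isClosed_sigmaTopology_iff.1 (@isClosed_connectedComponent X (sigmaTopology σ) x)).2

theorem sigmaComponent_iterate (n : ℕ) : sigmaComponent σ (σ^[n] x) = sigmaComponent σ x :=
  sigmaComponent_eq_of_mem (mapsTo_sigmaComponent.iterate n mem_sigmaComponent)

theorem sigmaComponent_eq_of_mem_closure_orbits_meet
    (hx : x ∈ closure {z | ∃ m n, σ^[m] z = σ^[n] y}) :
    sigmaComponent σ x = sigmaComponent σ y := by
  refine sigmaComponent_eq_of_mem (closure_minimal ?_ isClosed_sigmaComponent hx)
  rintro z ⟨m, n, hz⟩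
  rw [← sigmaComponent_iterate n, ← hz, sigmaComponent_iterate]
  exact mem_sigmaComponent

end SigmaComponent

section FollowerSet

variable {A : Type*}

/-- The sequence that starts with the first `i` entries of `x` and continues with `u`. -/
def splice (x : ℕ → A) (i : ℕ) (u : ℕ → A) : ℕ → A :=
  fun n => if n < i then x n else u (n - i)

/-- The follower set in `X` of the prefix of length `i` of `x`: all the continuations of this
prefix to a point of `X`. -/
def followerSet (X : Set (ℕ → A)) (x : ℕ → A) (i : ℕ) : Set (ℕ → A) :=
  {u | splice x i u ∈ X}

theorem splice_apply_of_lt {x u : ℕ → A} {i n : ℕ} (h : n < i) : splice x i u n = x n :=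
  if_pos h

theorem splice_apply_add (x u : ℕ → A) (i n : ℕ) : splice x i u (i + n) = u n := by
  simp [splice]

theorem oneShift_iterate_apply (a : ℕ → A) (i n : ℕ) : oneShift^[i] a n = a (i + n) := by
  induction i generalizing a with
  | zero => simp
  | succ i ih => rw [iterate_succ_apply, ih, oneShift, Nat.add_right_comm]

theorem oneShift_iterate_splice (x u : ℕ → A) (i : ℕ) : oneShift^[i] (splice x i u) = u := by
  ext n
  rw [oneShift_iterate_apply, splice_apply_add]

theorem splice_oneShift_iterate (x : ℕ → A) (i : ℕ) : splice x i (oneShift^[i] x) = x := by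
  ext n
  rcases lt_or_ge n i with hn | hn
  · exact splice_apply_of_lt hn
  · obtain ⟨k, rfl⟩ := Nat.exists_eq_add_of_le hn
    rw [splice_apply_add, oneShift_iterate_apply]

theorem oneShift_iterate_mem_followerSet {X : Set (ℕ → A)} {x : ℕ → A} (hx : x ∈ X) (i : ℕ) :
    oneShift^[i] x ∈ followerSet X x i := by
  change splice x i _ ∈ X
  rwa [splice_oneShift_iterate]

variable [TopologicalSpace A]

theorem tendsto_splice_atTop (x u : ℕ → A) :
    Tendsto (fun i => splice x i u) atTop (𝓝 x) := by
  refine tendsto_pi_nhds.2 fun n => tendsto_const_nhds.congr' ?_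
  filter_upwards [eventually_gt_atTop n] with i hi
  exact (splice_apply_of_lt hi).symm

variable {X : Set (ℕ → A)} (hstable : MapsTo oneShift X X)

theorem sigmaComponent_eq_of_frequently_followerSet_eq {x y : X} {j : ℕ}
    (h : ∃ᶠ i in atTop, followerSet X x i = followerSet X y j) :
    sigmaComponent (hstable.restrict oneShift X X) x =
      sigmaComponent (hstable.restrict oneShift X X) y := by
  apply sigmaComponent_eq_of_mem_closure_orbits_meet
  rw [closure_subtype]
  refine mem_closure_of_frequently_of_tendsto (h.mono fun i hi => ?_)
    (tendsto_splice_atTop x.1 (oneShift^[j] y.1))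
  have hmem : splice x.1 i (oneShift^[j] y.1) ∈ X :=
    hi.superset (oneShift_iterate_mem_followerSet y.2 j)
  refine ⟨⟨_, hmem⟩, ⟨i, j, Subtype.ext ?_⟩, rfl⟩
  simp only [MapsTo.coe_iterate_restrict, oneShift_iterate_splice]

theorem finite_range_sigmaComponent_of_finite_followerSets
    (hfin : (range fun p : X × ℕ => followerSet X p.1 p.2).Finite) :
    (range (sigmaComponent (hstable.restrict oneShift X X))).Finite := by
  have hrec (x : X) : ∃ T, ∃ᶠ i in atTop, followerSet X x i = T :=
    exists_frequently_eq_of_finite_range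
      (hfin.subset (range_subset_iff.2 fun i => mem_range_self (x, i)))
  choose T hT using hrec
  have hT_mem : range T ⊆ range fun p : X × ℕ => followerSet X p.1 p.2 := by
    rintro _ ⟨x, rfl⟩
    obtain ⟨i, hi⟩ := (hT x).exists
    exact ⟨(x, i), hi⟩
  refine finite_range_of_factorsThrough (hfin.subset hT_mem) fun x y hxy => ?_
  obtain ⟨j, hj⟩ := (hT y).exists
  have hfreq : ∃ᶠ i in atTop, followerSet X x i = followerSet X y j :=
    (hxy.trans hj.symm) ▸ hT x
  exact sigmaComponent_eq_of_frequently_followerSet_eq hstable hfreq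

end FollowerSet

section ForbiddenBlocks

variable {A : Type*} {F : Set ((k : ℕ) × (Fin k → A))}

/-- The block `b` occurs in the sequence `a`, starting at position `m`. -/
def BlockOccursAt (b : (k : ℕ) × (Fin k → A)) (a : ℕ → A) (m : ℕ) : Prop :=
  ∀ s : Fin b.1, a (m + s) = b.2 s

/-- The first `t` entries of the block `b` occur in the sequence `a`, starting at position `m`. -/
def BlockPrefixOccursAt (b : (k : ℕ) × (Fin k → A)) (t : ℕ) (a : ℕ → A) (m : ℕ) : Prop :=
  ∀ s : Fin b.1, (s : ℕ) < t → a (m + s) = b.2 s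

/-- The sequences in which no block of `F` occurs. -/
def avoidingSequences (F : Set ((k : ℕ) × (Fin k → A))) : Set (ℕ → A) :=
  {a | ∀ b ∈ F, ∀ m, ¬ BlockOccursAt b a m}

/-- The proper prefixes of forbidden blocks with which the prefix of length `i` of `x` ends; the
pair `⟨b, t⟩` stands for the prefix of length `t` of `b`. -/
def pendingPrefixes (F : Set ((k : ℕ) × (Fin k → A))) (x : ℕ → A) (i : ℕ) :
    Set ((b : F) × Fin b.1.1) :=
  {p | ∃ m, m + p.2 = i ∧ BlockPrefixOccursAt p.1.1 p.2 x m}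

variable {b : (k : ℕ) × (Fin k → A)} {x y u : ℕ → A}

theorem blockOccursAt_splice_add_iff {i m : ℕ} :
    BlockOccursAt b (splice x i u) (i + m) ↔ BlockOccursAt b u m := by
  simp only [BlockOccursAt, Nat.add_assoc, splice_apply_add]

theorem blockOccursAt_splice_iff {m t : ℕ} :
    BlockOccursAt b (splice x (m + t) u) m ↔
      BlockPrefixOccursAt b t x m ∧ ∀ s : Fin b.1, t ≤ s → u (s - t) = b.2 s := by
  have left {s : ℕ} (hs : s < t) : splice x (m + t) u (m + s) = x (m + s) :=
    splice_apply_of_lt (by lia)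
  have right {s : ℕ} (hs : t ≤ s) : splice x (m + t) u (m + s) = u (s - t) := by
    rw [← splice_apply_add x u (m + t) (s - t)]
    congr 1
    lia
  refine ⟨fun h => ⟨fun s hs => left hs ▸ h s, fun s hs => right hs ▸ h s⟩, fun h s => ?_⟩
  rcases lt_or_ge (s : ℕ) t with hs | hs
  · exact (left hs).trans (h.1 s hs)
  · exact (right hs).trans (h.2 s hs)

theorem followerSet_avoidingSequences_subset {i j : ℕ} (hy : y ∈ avoidingSequences F)
    (h : pendingPrefixes F y j ⊆ pendingPrefixes F x i) :
    followerSet (avoidingSequences F) x i ⊆ followerSet (avoidingSequences F) y j := by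
  intro u hu b hb m hocc
  rcases le_total j m with hjm | hmj
  · obtain ⟨n, rfl⟩ := Nat.exists_eq_add_of_le hjm
    exact hu b hb (i + n) (blockOccursAt_splice_add_iff.2 (blockOccursAt_splice_add_iff.1 hocc))
  · obtain ⟨t, rfl⟩ := Nat.exists_eq_add_of_le hmj
    obtain ⟨hhead, htail⟩ := blockOccursAt_splice_iff.1 hocc
    rcases lt_or_ge t b.1 with ht | ht
    · obtain ⟨n, rfl, hhead'⟩ := h (show ⟨⟨b, hb⟩, ⟨t, ht⟩⟩ ∈ _ from ⟨m, rfl, hhead⟩)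
      exact hu b hb n (blockOccursAt_splice_iff.2 ⟨hhead', htail⟩)
    · exact hy b hb m fun s => hhead s (s.2.trans_le ht)

theorem finite_followerSets_avoidingSequences (hF : F.Finite) :
    (range fun p : avoidingSequences F × ℕ =>
      followerSet (avoidingSequences F) p.1 p.2).Finite := by
  have : Finite F := hF
  refine finite_range_of_factorsThrough
    (f := fun p : avoidingSequences F × ℕ => pendingPrefixes F p.1 p.2) (toFinite _) ?_
  rintro ⟨x, i⟩ ⟨y, j⟩ hxy
  exact (followerSet_avoidingSequences_subset y.2 hxy.superset).antisymm
    (followerSet_avoidingSequences_subset x.2 hxy.subset)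

theorem avoidingSequences_eq_setOf_exists_ne :
    avoidingSequences F = {a | ∀ b ∈ F, ∀ i : ℕ, ∃ j : Fin b.1, a (i + (j : ℕ)) ≠ b.2 j} := by
  simp only [avoidingSequences, BlockOccursAt, not_forall, ne_eq]

end ForbiddenBlocks

theorem sft_finitely_many_sigma_components_general
    {A : Type*} [TopologicalSpace A] (X : Set (ℕ → A)) (hstable : MapsTo oneShift X X)
    (F : Set ((k : ℕ) × (Fin k → A))) (hF : F.Finite)
    (hX : X = {a : ℕ → A | ∀ b ∈ F, ∀ i : ℕ, ∃ j : Fin b.1, a (i + (j : ℕ)) ≠ b.2 j}) :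
    (range (sigmaComponent (hstable.restrict oneShift X X))).Finite := by
  obtain rfl : X = avoidingSequences F := hX.trans avoidingSequences_eq_setOf_exists_ne.symm
  exact finite_range_sigmaComponent_of_finite_followerSets hstable
    (finite_followerSets_avoidingSequences hF)

/-- Let `A` be a finite set and `X ⊆ A^ℕ` a one-sided subshift of finite
type (a closed shift-stable subset cut out by the exclusion of a finite set `F` of
forbidden blocks, of possibly varying lengths). Then `X` has only finitely many
σ-connected components, i.e. connected components in the σ-topology of the subspace `X`
with the restricted shift map. -/
theorem sft_finitely_many_sigma_components
    {A : Type*} [Finite A] [TopologicalSpace A] [DiscreteTopology A]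
    (X : Set (ℕ → A)) (hclosed : IsClosed X) (hstable : Set.MapsTo oneShift X X)
    (F : Set ((k : ℕ) × (Fin k → A))) (hF : F.Finite)
    (hX : X = {a : ℕ → A | ∀ b ∈ F, ∀ i : ℕ, ∃ j : Fin b.1, a (i + (j : ℕ)) ≠ b.2 j}) :
    (Set.range fun x : X =>
      @connectedComponent X (sigmaTopology (Set.MapsTo.restrict oneShift X X hstable)) x).Finite := by
  exact sft_finitely_many_sigma_components_general X hstable F hF hX
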